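/- Let M be a symmetric matrix with entries in {0,1,*}, indexed by a finite set D, let S ⊆ D, and let k be an integer with k > |D|. Let ℓ = |{i ∈ S : M_{i,i} = 1}|. Consider the functions σ : {1,…,k} → D whose image is exactly S and which satisfy M_{σ(u),σ(v)} ∈ {0,*} for all distinct u, v ∈ {1,…,k} (these are the S-surjective M-partitions of the empty graph on k vertices). If ℓ = |S|, or there exist distinct i, j ∈ S with M_{i,j} = 1, then there are no such functions. Otherwise, the number of such functions is exactly k⁽ℓ⁾ · (|S|−ℓ)! · S(k−ℓ, |S|−ℓ). -/

import Mathlib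

/-- The three possible entries `0`, `1`, `*` of a matrix-partition matrix. -/
inductive Entry : Type
  | zero | one | star
deriving DecidableEq

/-- Stirling numbers of the second kind: `stirling2 n k` is the number of
partitions of an `n`-element set into `k` nonempty blocks. -/
def stirling2 : ℕ → ℕ → ℕ
  | 0, 0 => 1
  | 0, _ + 1 => 0
  | _ + 1, 0 => 0
  | n + 1, k + 1 => (k + 1) * stirling2 n (k + 1) + stirling2 n k

/-!
If no two distinct elements of `S` carry a `1`, then `σ` is admissible exactly when it is injective
over the set `A` of those `i ∈ S` with `M i i = 1`. Such a map with range `S` amounts to an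
embedding `A ↪ V`, sending each element of `A` to its only preimage, together with a map from the
remaining `|V| - |A|` vertices onto `S \ A`. The embeddings are counted by a falling factorial and
the maps onto `S \ A` by Stirling numbers, through the recurrence obtained by deleting a vertex.
When `A = S`, an admissible `σ` is injective, which forces `|V| = |S|`.
-/

open Set Function
open scoped Nat

section CountingByRange

variable {α ι : Type*} {s t : Set α}

theorem insert_eq_iff_mem_and_eq_or_eq_sdiff_singleton {a : α} :
    insert a s = t ↔ a ∈ t ∧ (s = t ∨ s = t \ {a}) := by
  constructor
  · rintro rfl
    refine ⟨mem_insert a s, ?_⟩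
    by_cases ha : a ∈ s
    · exact .inl (insert_eq_of_mem ha).symm
    · exact .inr (insert_sdiff_self_of_notMem ha).symm
  · rintro ⟨ha, rfl | rfl⟩
    · exact insert_eq_of_mem ha
    · exact insert_sdiff_self_of_mem ha

theorem finite_setOf_range_subset [Finite ι] (hs : s.Finite) : {f : ι → α | range f ⊆ s}.Finite :=
  (Finite.pi' fun _ : ι ↦ hs).subset fun _ hf i ↦ hf (mem_range_self i)

theorem finite_subtype_range_eq [Finite ι] (hs : s.Finite) : Finite {f : ι → α // range f = s} :=
  (finite_setOf_range_subset hs).subset fun _ hf ↦ (show range _ = s from hf).subset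

theorem card_range_eq_or_eq_sdiff_singleton [Finite ι] (hs : s.Finite) {a : α} (ha : a ∈ s) :
    Nat.card {f : ι → α // range f = s ∨ range f = s \ {a}} =
      Nat.card {f : ι → α // range f = s} + Nat.card {f : ι → α // range f = s \ {a}} := by
  classical
  have := finite_subtype_range_eq (ι := ι) hs
  have := finite_subtype_range_eq (ι := ι) (hs.sdiff (t := {a}))
  have hdisj : Disjoint (fun f : ι → α ↦ range f = s) (fun f ↦ range f = s \ {a}) := by
    simp only [Pi.disjoint_iff, Prop.disjoint_iff]
    rintro f ⟨hf, hf'⟩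
    exact (hf' ▸ hf ▸ ha : a ∈ s \ {a}).2 rfl
  rw [Nat.card_congr (subtypeOrEquiv _ _ hdisj), Nat.card_sum]

/-- Splitting off the first value of a tuple with range `s`; the other values miss at most that
one element of `s`. -/
def rangeEqSuccEquiv (n : ℕ) (s : Set α) :
    {f : Fin (n + 1) → α // range f = s} ≃
      Σ a : s, {g : Fin n → α // range g = s ∨ range g = s \ {a.1}} where
  toFun f :=
    have h : f.1 0 ∈ s ∧ (range (Fin.tail f.1) = s ∨ range (Fin.tail f.1) = s \ {f.1 0}) := by
      rw [← insert_eq_iff_mem_and_eq_or_eq_sdiff_singleton, ← Fin.range_cons, Fin.cons_self_tail]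
      exact f.2
    ⟨⟨f.1 0, h.1⟩, Fin.tail f.1, h.2⟩
  invFun x := ⟨Fin.cons x.1.1 x.2.1, by
    rw [Fin.range_cons, insert_eq_iff_mem_and_eq_or_eq_sdiff_singleton]
    exact ⟨x.1.2, x.2.2⟩⟩
  left_inv f := Subtype.ext (Fin.cons_self_tail f.1)
  right_inv _ := rfl

theorem card_fin_succ_range_eq (n : ℕ) [Fintype s] :
    Nat.card {f : Fin (n + 1) → α // range f = s} =
      ∑ a : s, (Nat.card {g : Fin n → α // range g = s} +
        Nat.card {g : Fin n → α // range g = s \ {a.1}}) := by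
  have (a : s) : Finite {g : Fin n → α // range g = s ∨ range g = s \ {a.1}} :=
    (finite_setOf_range_subset s.toFinite).subset fun _ hg ↦
      hg.elim (fun h ↦ h.subset) fun h ↦ h.subset.trans sdiff_subset
  rw [Nat.card_congr (rangeEqSuccEquiv n s), Nat.card_sigma]
  exact Finset.sum_congr rfl fun a _ ↦ card_range_eq_or_eq_sdiff_singleton s.toFinite a.2

theorem card_fin_range_eq (n : ℕ) (hs : s.Finite) :
    Nat.card {f : Fin n → α // range f = s} = s.ncard ! * n.stirlingSecond s.ncard := by
  induction n generalizing s with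
  | zero =>
    rcases s.eq_empty_or_nonempty with rfl | hne
    · simp
    · obtain ⟨m, hm⟩ := Nat.exists_eq_succ_of_ne_zero ((ncard_pos hs).2 hne |>.ne')
      simp [hm, hne.ne_empty.symm]
  | succ n ih =>
    rcases s.eq_empty_or_nonempty with rfl | hne
    · simp
    have := hs.fintype
    have hs₀ : s.ncard ≠ 0 := (ncard_pos hs).2 hne |>.ne'
    have hfiber (a : s) : Nat.card {g : Fin n → α // range g = s \ {a.1}} =
        (s.ncard - 1)! * n.stirlingSecond (s.ncard - 1) := by
      rw [ih hs.sdiff, ncard_sdiff_singleton_of_mem a.2]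
    calc Nat.card {f : Fin (n + 1) → α // range f = s}
        = s.ncard * (s.ncard ! * n.stirlingSecond s.ncard +
            (s.ncard - 1)! * n.stirlingSecond (s.ncard - 1)) := by
          simp only [card_fin_succ_range_eq, ih hs, hfiber, Finset.sum_const, Finset.card_univ,
            smul_eq_mul, ← Nat.card_eq_fintype_card, Nat.card_coe_set_eq]
      _ = s.ncard ! * (n + 1).stirlingSecond s.ncard := by
          rw [Nat.stirlingSecond_succ_left n _ hs₀, ← Nat.mul_factorial_pred hs₀]
          ring

theorem card_range_eq [Finite ι] (hs : s.Finite) :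
    Nat.card {f : ι → α // range f = s} =
      s.ncard ! * (Nat.card ι).stirlingSecond s.ncard := by
  rw [← card_fin_range_eq _ hs]
  exact Nat.card_congr <| ((Finite.equivFin ι).arrowCongr (.refl α)).subtypeEquiv fun f ↦ by
    simp [Equiv.arrowCongr, EquivLike.range_comp]

end CountingByRange

section InjectiveOverSubset

variable {α ι : Type*} {s t : Set α}

open Classical in
/-- The map which inverts `e` on the range of `e` and agrees with `g` elsewhere. It is used to
assemble a map that is injective over `s` from its unique preimages of elements of `s` and its
restriction to the remaining points. -/
noncomputable def glueInverse (e : s ↪ ι) (g : ↥(range e)ᶜ → α) : ι → α :=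
  Sum.elim Subtype.val g ∘
    ((Equiv.ofInjective e e.injective).sumCongr (.refl _) |>.trans
      (Equiv.Set.sumCompl (range e))).symm

theorem glueInverse_apply_embedding (e : s ↪ ι) (g : ↥(range e)ᶜ → α) (a : s) :
    glueInverse e g (e a) = a :=
  congrArg (Sum.elim Subtype.val g) (Equiv.symm_apply_apply _ (Sum.inl a))

theorem glueInverse_apply_compl (e : s ↪ ι) (g : ↥(range e)ᶜ → α) (i : ↥(range e)ᶜ) :
    glueInverse e g i = g i :=
  congrArg (Sum.elim Subtype.val g) (Equiv.symm_apply_apply _ (Sum.inr i))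

theorem range_glueInverse (e : s ↪ ι) (g : ↥(range e)ᶜ → α) :
    range (glueInverse e g) = s ∪ range g := by
  rw [glueInverse, EquivLike.range_comp, Set.Sum.elim_range, Subtype.range_val]

theorem glueInverse_eq_iff (e : s ↪ ι) {g : ↥(range e)ᶜ → α} (hg : Disjoint s (range g))
    {i : ι} {a : s} : glueInverse e g i = a ↔ i = e a := by
  refine ⟨fun h ↦ ?_, fun h ↦ h ▸ glueInverse_apply_embedding e g a⟩
  by_cases hi : i ∈ range e
  · obtain ⟨b, rfl⟩ := hi
    rw [glueInverse_apply_embedding] at h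
    rw [Subtype.ext h]
  · have hgi : g ⟨i, hi⟩ = a := glueInverse_apply_compl e g ⟨i, hi⟩ ▸ h
    exact (hg.notMem_of_mem_left a.2 ⟨_, hgi⟩).elim

theorem injOn_glueInverse (e : s ↪ ι) {g : ↥(range e)ᶜ → α} (hg : Disjoint s (range g)) :
    InjOn (glueInverse e g) (glueInverse e g ⁻¹' s) := by
  intro i hi j _ hij
  lift glueInverse e g i to s using hi with a ha
  rw [(glueInverse_eq_iff e hg).1 ha.symm, (glueInverse_eq_iff e hg).1 hij.symm]

theorem sigma_mk_eq_of_glueInverse_eq {e e' : s ↪ ι} {g : ↥(range e)ᶜ → α} {g' : ↥(range e')ᶜ → α}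
    (hg' : Disjoint s (range g')) (h : glueInverse e g = glueInverse e' g') :
    (⟨e, g⟩ : Σ e : s ↪ ι, ↥(range e)ᶜ → α) = ⟨e', g'⟩ := by
  obtain rfl : e = e' := by
    ext a
    rw [← glueInverse_eq_iff e' hg', ← h, glueInverse_apply_embedding]
  obtain rfl : g = g' := by
    ext i
    rw [← glueInverse_apply_compl e g, h, glueInverse_apply_compl]
  rfl

theorem exists_glueInverse_eq {f : ι → α} (hs : s ⊆ range f) (hf : InjOn f (f ⁻¹' s)) :
    ∃ (e : s ↪ ι) (g : ↥(range e)ᶜ → α), range g = range f \ s ∧ glueInverse e g = f := by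
  choose p hp using fun a : s ↦ hs a.2
  let e : s ↪ ι := ⟨p, fun a b hab ↦ Subtype.ext (by rw [← hp a, ← hp b, hab])⟩
  have hfe (a : s) : f (e a) = a := hp a
  have hrange : (range e)ᶜ = f ⁻¹' sᶜ := by
    rw [preimage_compl, compl_inj_iff]
    have hmem (a : s) : e a ∈ f ⁻¹' s := by rw [mem_preimage, hfe]; exact a.2
    exact (range_subset_iff.2 hmem).antisymm fun i hi ↦ ⟨⟨f i, hi⟩, hf (hmem _) hi (hfe _)⟩
  refine ⟨e, f ∘ Subtype.val, ?_, ?_⟩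
  · rw [range_comp, Subtype.range_val, hrange, image_preimage_eq_range_inter, Set.sdiff_eq]
  · ext i
    by_cases hi : i ∈ range e
    · obtain ⟨a, rfl⟩ := hi
      rw [glueInverse_apply_embedding, hfe]
    · exact glueInverse_apply_compl e _ ⟨i, hi⟩

/-- Maps onto `s ∪ t` that are injective over `s` correspond to pairs of an embedding of `s` and a
map from the remaining points onto `t`. -/
noncomputable def glueInverseEquiv (hst : Disjoint s t) :
    (Σ e : s ↪ ι, {g : ↥(range e)ᶜ → α // range g = t}) ≃
      {f : ι → α // range f = s ∪ t ∧ InjOn f (f ⁻¹' s)} :=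
  .ofBijective
    (fun x ↦ ⟨glueInverse x.1 x.2.1, by rw [range_glueInverse, x.2.2],
      injOn_glueInverse x.1 (x.2.2.symm ▸ hst)⟩) <| by
    constructor
    · rintro ⟨e, g, hg⟩ ⟨e', g', hg'⟩ h
      cases sigma_mk_eq_of_glueInverse_eq (hg'.symm ▸ hst) (congrArg Subtype.val h)
      rfl
    · rintro ⟨f, hf, hinj⟩
      obtain ⟨e, g, hg, rfl⟩ := exists_glueInverse_eq (hf ▸ subset_union_left) hinj
      rw [hf, union_sdiff_cancel_left hst.inter_eq.subset] at hg
      exact ⟨⟨e, g, hg⟩, rfl⟩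

theorem card_range_eq_union_and_injOn [Finite ι] (hs : s.Finite) (ht : t.Finite)
    (hst : Disjoint s t) :
    Nat.card {f : ι → α // range f = s ∪ t ∧ InjOn f (f ⁻¹' s)} =
      (Nat.card ι).descFactorial s.ncard * t.ncard ! *
        (Nat.card ι - s.ncard).stirlingSecond t.ncard := by
  classical
  have := hs.fintype
  have := Fintype.ofFinite ι
  have (e : s ↪ ι) := finite_subtype_range_eq (ι := ↥(range e)ᶜ) ht
  have hcompl (e : s ↪ ι) : Nat.card ↥(range e)ᶜ = Nat.card ι - s.ncard := by
    rw [Nat.card_coe_set_eq, ncard_compl, ← Nat.card_coe_set_eq (range e),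
      Nat.card_range_of_injective e.injective, Nat.card_coe_set_eq]
  have hemb : Fintype.card (s ↪ ι) = (Nat.card ι).descFactorial s.ncard := by
    rw [Fintype.card_embedding_eq, ← Nat.card_eq_fintype_card, ← Nat.card_eq_fintype_card,
      Nat.card_coe_set_eq]
  rw [← Nat.card_congr (glueInverseEquiv hst), Nat.card_sigma]
  simp only [card_range_eq ht, hcompl, Finset.sum_const, Finset.card_univ, hemb, smul_eq_mul,
    mul_assoc]

end InjectiveOverSubset

section Relation

variable {α ι : Type*} {r : α → α → Prop} {f : ι → α}

theorem injOn_of_forall_ne_not_rel (h : ∀ i j, i ≠ j → ¬ r (f i) (f j)) :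
    InjOn f (f ⁻¹' {a | r a a}) := by
  intro i hi j _ hij
  by_contra hne
  exact h i j hne (hij ▸ hi)

theorem forall_ne_not_rel_iff_injOn (hr : (range f).Pairwise fun a b ↦ ¬ r a b) :
    (∀ i j, i ≠ j → ¬ r (f i) (f j)) ↔ InjOn f (f ⁻¹' {a | r a a}) := by
  refine ⟨injOn_of_forall_ne_not_rel, fun h i j hne hij ↦ ?_⟩
  by_cases hf : f i = f j
  · exact hne (h (show r (f i) (f i) by rwa [← hf] at hij)
      (show r (f j) (f j) by rwa [hf] at hij) hf)
  · exact hr (mem_range_self i) (mem_range_self j) hf hij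

theorem ncard_range_eq_card_of_forall_ne_not_rel (h : ∀ i j, i ≠ j → ¬ r (f i) (f j))
    (hr : range f ⊆ {a | r a a}) : (range f).ncard = Nat.card ι := by
  have huniv : f ⁻¹' {a | r a a} = univ := eq_univ_of_forall fun i ↦ hr (mem_range_self i)
  have hf : Injective f := by
    rw [← injOn_univ, ← huniv]
    exact injOn_of_forall_ne_not_rel h
  rw [← Nat.card_coe_set_eq, Nat.card_range_of_injective hf]

theorem card_range_eq_and_forall_ne_not_rel [Finite ι] {s : Set α} (hs : s.Finite)
    (hr : s.Pairwise fun a b ↦ ¬ r a b) :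
    Nat.card {f : ι → α // range f = s ∧ ∀ i j, i ≠ j → ¬ r (f i) (f j)} =
      (Nat.card ι).descFactorial (s ∩ {a | r a a}).ncard *
        (s.ncard - (s ∩ {a | r a a}).ncard)! *
          (Nat.card ι - (s ∩ {a | r a a}).ncard).stirlingSecond
            (s.ncard - (s ∩ {a | r a a}).ncard) := by
  have hdiag : s ∩ {a | r a a} ⊆ s := inter_subset_left
  rw [← ncard_sdiff hdiag (hs.subset hdiag), ← card_range_eq_union_and_injOn (hs.subset hdiag)
    hs.sdiff disjoint_sdiff_right, union_sdiff_cancel hdiag]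
  refine Nat.card_congr (Equiv.subtypeEquivRight fun f ↦ and_congr_right ?_)
  rintro rfl
  rw [preimage_range_inter, forall_ne_not_rel_iff_injOn hr]

end Relation

theorem stirling2_eq_stirlingSecond : ∀ n m, stirling2 n m = n.stirlingSecond m
  | 0, 0 | 0, _ + 1 | _ + 1, 0 => rfl
  | n + 1, m + 1 => by
    rw [stirling2, Nat.stirlingSecond_succ_succ, stirling2_eq_stirlingSecond n (m + 1),
      stirling2_eq_stirlingSecond n m]

theorem stmt7_general {D V : Type*} [Finite V] (M : D → D → Entry) {S : Set D} (hS : S.Finite)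
    {k : ℕ} (hk : Nat.card V = k) {ℓ : ℕ} (hℓ : ℓ = (S ∩ {i | M i i = Entry.one}).ncard) :
    ((ℓ = S.ncard ∧ S.ncard ≠ k ∨ ∃ i ∈ S, ∃ j ∈ S, i ≠ j ∧ M i j = Entry.one) →
      Nat.card {σ : V → D // range σ = S ∧
        ∀ u v : V, u ≠ v → M (σ u) (σ v) ≠ Entry.one} = 0) ∧
    ((¬ ∃ i ∈ S, ∃ j ∈ S, i ≠ j ∧ M i j = Entry.one) →
      Nat.card {σ : V → D // range σ = S ∧
        ∀ u v : V, u ≠ v → M (σ u) (σ v) ≠ Entry.one} =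
      k.descFactorial ℓ * (S.ncard - ℓ)! * stirling2 (k - ℓ) (S.ncard - ℓ)) := by
  subst hk hℓ
  refine ⟨fun h ↦ ?_, fun h ↦ ?_⟩
  · rw [Nat.card_eq_zero]
    refine .inl ⟨?_⟩
    rintro ⟨σ, rfl, hσ⟩
    rcases h with ⟨hdiag, hcard⟩ | ⟨_, ⟨u, rfl⟩, _, ⟨v, rfl⟩, hne, hone⟩
    · have hsub : range σ ⊆ {i | M i i = Entry.one} :=
        inter_eq_left.1 (eq_of_subset_of_ncard_le inter_subset_left hdiag.ge hS)
      exact hcard <|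
        ncard_range_eq_card_of_forall_ne_not_rel (r := fun i j ↦ M i j = Entry.one) hσ hsub
    · exact hσ u v (ne_of_apply_ne σ hne) hone
  · rw [stirling2_eq_stirlingSecond]
    exact card_range_eq_and_forall_ne_not_rel (r := fun i j ↦ M i j = Entry.one) hS
      fun i hi j hj hne hone ↦ h ⟨i, hi, j, hj, hne, hone⟩

/-- Counting `S`-surjective `M`-partitions of the empty graph on `k > |D|` vertices:
with `ℓ = |{i ∈ S : M i i = 1}|`, if `ℓ = |S|` or some distinct `i,j ∈ S` have
`M i j = 1` there are none; otherwise there are `k⁽ℓ⁾·(|S|−ℓ)!·S(k−ℓ,|S|−ℓ)`. -/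
theorem stmt7 {D : Type} [Fintype D] (M : D → D → Entry)
    (hsym : ∀ i j, M i j = M j i) (S : Set D) (k : ℕ) (hk : Fintype.card D < k)
    (ℓ : ℕ) (hℓ : ℓ = (S ∩ {i | M i i = Entry.one}).ncard) :
    ((ℓ = S.ncard ∨ ∃ i ∈ S, ∃ j ∈ S, i ≠ j ∧ M i j = Entry.one) →
      Nat.card {σ : Fin k → D // Set.range σ = S ∧
        ∀ u v : Fin k, u ≠ v → M (σ u) (σ v) ≠ Entry.one} = 0) ∧
    (¬ (ℓ = S.ncard ∨ ∃ i ∈ S, ∃ j ∈ S, i ≠ j ∧ M i j = Entry.one) →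
      Nat.card {σ : Fin k → D // Set.range σ = S ∧
        ∀ u v : Fin k, u ≠ v → M (σ u) (σ v) ≠ Entry.one} =
      k.descFactorial ℓ * (S.ncard - ℓ).factorial * stirling2 (k - ℓ) (S.ncard - ℓ)) := by
  have hcard : S.ncard ≠ k := (S.ncard_le_card.trans_lt (by rwa [Nat.card_eq_fintype_card])).ne
  have hcount := stmt7_general M S.toFinite (Nat.card_fin k) hℓ
  exact ⟨fun h ↦ hcount.1 (h.imp_left (⟨·, hcard⟩)), fun h ↦ hcount.2 (not_or.1 h).2⟩
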